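/- arXiv:2112.14803 — 2 statements merged into one kernel-verified Lean document; each statement's English description precedes it below -/
import Mathlib

section
/- For any prime power q ≥ 5, the q+1 tangents to the twisted cubic C form a single orbit of lines under G_q, and the stabilizer in G_q of any tangent has order q(q−1). Moreover, the stabilizer in G_q of the tangent T_∞ consists exactly of the projectivities induced by the matrices with rows (1,0,0,0), (3b,d,0,0), (3b²,2bd,d²,0), (b³,b²d,bd²,d³), where b ∈ F_q and d ∈ F_q^*. -/
open Matrix Submodule

noncomputable section

/-- Row-vector action of an invertible matrix on subspaces of `F^4`:
a projectivity of `PG(3,q)` induced by the matrix. -/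
def projAct (F : Type) [Field F] (A : GL (Fin 4) F) :
    Submodule F (Fin 4 → F) → Submodule F (Fin 4 → F) :=
  fun W => W.map (Matrix.vecMulLinear (A : Matrix (Fin 4) (Fin 4) F))

/-- Representative vectors of the points of the twisted cubic. -/
def cubicVecs (F : Type) [Field F] : Set (Fin 4 → F) :=
  {v | (∃ t : F, v = ![t ^ 3, t ^ 2, t, 1]) ∨ v = ![1, 0, 0, 0]}

/-- The twisted cubic, as a set of projective points (1-dimensional subspaces). -/
def twistedCubic (F : Type) [Field F] : Set (Submodule F (Fin 4 → F)) :=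
  (fun v => Submodule.span F {v}) '' cubicVecs F

/-- The group `G_q` of projectivities fixing the twisted cubic, modeled as those maps
on subspaces that are induced by an invertible matrix and map the cubic onto itself. -/
def Gq (F : Type) [Field F] :
    Set ((Submodule F (Fin 4 → F)) → (Submodule F (Fin 4 → F))) :=
  {f | (∃ A : GL (Fin 4) F, f = projAct F A) ∧ f '' twistedCubic F = twistedCubic F}

def isPoint (F : Type) [Field F] (W : Submodule F (Fin 4 → F)) : Prop :=
  Module.finrank F W = 1

def isLine (F : Type) [Field F] (W : Submodule F (Fin 4 → F)) : Prop :=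
  Module.finrank F W = 2

/-- The orbit of a line under `G_q`. -/
def lineOrbit (F : Type) [Field F] (ℓ : Submodule F (Fin 4 → F)) :
    Set (Submodule F (Fin 4 → F)) :=
  {m | ∃ f ∈ Gq F, f ℓ = m}

/-- The stabilizer of a line in `G_q`. -/
def lineStab (F : Type) [Field F] (ℓ : Submodule F (Fin 4 → F)) :
    Set ((Submodule F (Fin 4 → F)) → (Submodule F (Fin 4 → F))) :=
  {f ∈ Gq F | f ℓ = ℓ}

/-- The linear form `y ↦ c0 y0 + c1 y1 + c2 y2 + c3 y3` defining a plane. -/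
def planeForm (F : Type) [Field F] (c : Fin 4 → F) : (Fin 4 → F) →ₗ[F] F where
  toFun y := c 0 * y 0 + c 1 * y 1 + c 2 * y 2 + c 3 * y 3
  map_add' a b := by simp only [Pi.add_apply]; ring
  map_smul' r a := by simp only [Pi.smul_apply, smul_eq_mul, RingHom.id_apply]; ring

/-- The plane `π(c0,c1,c2,c3)`. -/
def planeOf (F : Type) [Field F] (c : Fin 4 → F) : Submodule F (Fin 4 → F) :=
  LinearMap.ker (planeForm F c)

/-- The null polarity `𝔄`: the polar subspace of `W` w.r.t. the bilinear form
sending a point `(x0:x1:x2:x3)` to the plane `π(x3, −3x2, 3x1, −x0)`. -/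
def nullPolarity (F : Type) [Field F] (W : Submodule F (Fin 4 → F)) :
    Submodule F (Fin 4 → F) :=
  ⨅ x ∈ (W : Set (Fin 4 → F)), planeOf F ![x 3, -(3 * x 2), 3 * x 1, -(x 0)]

/-- The tangent line to the twisted cubic at `P(t)`, `t ∈ F`. -/
def tangentAt (F : Type) [Field F] (t : F) : Submodule F (Fin 4 → F) :=
  Submodule.span F {![t ^ 3, t ^ 2, t, 1], ![3 * t ^ 2, 2 * t, 1, 0]}

/-- The tangent line to the twisted cubic at `P(∞)`. -/
def tangentAtInf (F : Type) [Field F] : Submodule F (Fin 4 → F) :=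
  Submodule.span F {![1, 0, 0, 0], ![0, 1, 0, 0]}

def isTangent (F : Type) [Field F] (ℓ : Submodule F (Fin 4 → F)) : Prop :=
  (∃ t : F, ℓ = tangentAt F t) ∨ ℓ = tangentAtInf F

/-- The osculating plane at `P(t)`, `t ∈ F`. -/
def oscPlane (F : Type) [Field F] (t : F) : Submodule F (Fin 4 → F) :=
  planeOf F ![1, -(3 * t), 3 * t ^ 2, -(t ^ 3)]

/-- The osculating plane at `P(∞)`. -/
def oscPlaneInf (F : Type) [Field F] : Submodule F (Fin 4 → F) :=
  planeOf F ![0, 0, 0, 1]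

def isOscPlane (F : Type) [Field F] (π : Submodule F (Fin 4 → F)) : Prop :=
  (∃ t : F, π = oscPlane F t) ∨ π = oscPlaneInf F

/-- A real chord: the line joining two distinct points of the twisted cubic. -/
def isRealChord (F : Type) [Field F] (ℓ : Submodule F (Fin 4 → F)) : Prop :=
  ∃ u ∈ cubicVecs F, ∃ v ∈ cubicVecs F,
    Submodule.span F {u} ≠ Submodule.span F {v} ∧ ℓ = Submodule.span F {u, v}

/-- A real axis: the intersection of two distinct osculating planes. -/
def isRealAxis (F : Type) [Field F] (ℓ : Submodule F (Fin 4 → F)) : Prop :=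
  ∃ π₁ π₂ : Submodule F (Fin 4 → F),
    isOscPlane F π₁ ∧ isOscPlane F π₂ ∧ π₁ ≠ π₂ ∧ ℓ = π₁ ⊓ π₂

/-- The `F_{q²}`-extension of a subspace of `F^4`. -/
def extendSub (F K : Type) [Field F] [Field K] [Algebra F K]
    (W : Submodule F (Fin 4 → F)) : Submodule K (Fin 4 → K) :=
  Submodule.span K ((fun v i => algebraMap F K (v i)) '' (W : Set (Fin 4 → F)))

/-- An external line: a line containing no point of the twisted cubic. -/
def isExternal (F : Type) [Field F] (ℓ : Submodule F (Fin 4 → F)) : Prop :=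
  isLine F ℓ ∧ ∀ P ∈ twistedCubic F, ¬ P ≤ ℓ

/-- An imaginary chord: a line disjoint from the cubic whose `F_{q²}`-extension joins a
pair of Frobenius-conjugate points `P(t)`, `P(t^q)` of the cubic over `F_{q²}`. -/
def isImagChord (F K : Type) [Field F] [Field K] [Algebra F K] (q : ℕ)
    (ℓ : Submodule F (Fin 4 → F)) : Prop :=
  isExternal F ℓ ∧
  ∃ t : K, t ∉ Set.range (algebraMap F K) ∧
    extendSub F K ℓ =
      Submodule.span K
        ({![t ^ 3, t ^ 2, t, 1], ![(t ^ q) ^ 3, (t ^ q) ^ 2, t ^ q, 1]} :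
          Set (Fin 4 → K))

/-- An imaginary axis: a line whose `F_{q²}`-extension is the intersection of a pair of
Frobenius-conjugate osculating planes `π_osc(t)`, `π_osc(t^q)` over `F_{q²}`. -/
def isImagAxis (F K : Type) [Field F] [Field K] [Algebra F K] (q : ℕ)
    (ℓ : Submodule F (Fin 4 → F)) : Prop :=
  isLine F ℓ ∧
  ∃ t : K, t ∉ Set.range (algebraMap F K) ∧
    extendSub F K ℓ =
      planeOf K ![1, -(3 * t), 3 * t ^ 2, -(t ^ 3)] ⊓
        planeOf K ![1, -(3 * t ^ q), 3 * (t ^ q) ^ 2, -((t ^ q) ^ 3)]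

/-- A unisecant: a line meeting the twisted cubic in exactly one point. -/
def isUnisecant (F : Type) [Field F] (ℓ : Submodule F (Fin 4 → F)) : Prop :=
  isLine F ℓ ∧ ∃! P, P ∈ twistedCubic F ∧ P ≤ ℓ

/-- A `UΓ`-line: a non-tangent unisecant lying in some osculating plane. -/
def isUGamma (F : Type) [Field F] (ℓ : Submodule F (Fin 4 → F)) : Prop :=
  isUnisecant F ℓ ∧ ¬ isTangent F ℓ ∧ ∃ π, isOscPlane F π ∧ ℓ ≤ π

/-- A `UnΓ`-line: a non-tangent unisecant lying in no osculating plane. -/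
def isUnGamma (F : Type) [Field F] (ℓ : Submodule F (Fin 4 → F)) : Prop :=
  isUnisecant F ℓ ∧ ¬ isTangent F ℓ ∧ ∀ π, isOscPlane F π → ¬ ℓ ≤ π

/-- An `EΓ`-line: an external line, other than an imaginary chord, lying in some
osculating plane. -/
def isEGamma (F K : Type) [Field F] [Field K] [Algebra F K] (q : ℕ)
    (ℓ : Submodule F (Fin 4 → F)) : Prop :=
  isExternal F ℓ ∧ ¬ isImagChord F K q ℓ ∧ ∃ π, isOscPlane F π ∧ ℓ ≤ π

/-- For `q ≡ 0 (mod 3)`: the axis of `Γ`, the line `x0 = x3 = 0`. -/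
def axisLine (F : Type) [Field F] : Submodule F (Fin 4 → F) :=
  Submodule.span F {![0, 1, 0, 0], ![0, 0, 1, 0]}

/-- For `q ≡ 0 (mod 3)`: an `EA`-line, i.e. an external line, other than an imaginary
chord and other than the axis of `Γ`, meeting the axis of `Γ`. -/
def isEA (F K : Type) [Field F] [Field K] [Algebra F K] (q : ℕ)
    (ℓ : Submodule F (Fin 4 → F)) : Prop :=
  isExternal F ℓ ∧ ¬ isImagChord F K q ℓ ∧ ℓ ≠ axisLine F ∧ ℓ ⊓ axisLine F ≠ ⊥

end

/-!
A projectivity preserving the cubic and fixing `P(∞)` sends `(t³, t², t, 1)` to `w(t)`, where the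
coordinates `w₁, w₂, w₃` are polynomials in `t` of degree at most two, `w₃` has no zeros, and
`w₁ w₃ = w₂²` at every `t`. Over a field with at least five elements this is an identity of
polynomials of degree at most four, so `w₃ ∣ w₂²` forces `w₃ ∣ w₂`; since `w₂` is not a multiple of
`w₃` by a constant, comparing degrees shows that `w₃` is constant and `w₂ / w₃` is linear. Hence the
projectivity acts on the cubic by an affine substitution `t ↦ (t + b) / d`, and it is determined by
that substitution. All of these fix the tangent at `P(∞)`; the rest follows because `t ↦ 1 / t`
together with the translations moves `P(∞)` and its tangent to any other point and its tangent.
-/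

section Polynomials

open Polynomial Cardinal

variable {K : Type*} [Field K]

lemma eq_of_natDegree_le_of_forall_eval_eq {p q : K[X]} {n : ℕ} (hp : p.natDegree ≤ n)
    (hq : q.natDegree ≤ n) (hn : n < #K) (h : ∀ t, p.eval t = q.eval t) : p = q := by
  refine sub_eq_zero.1 (eq_zero_of_forall_eval_zero_of_natDegree_lt_card _ (fun t => ?_) ?_)
  · rw [eval_sub, h, sub_self]
  · exact lt_of_le_of_lt (Nat.cast_le.2 ((natDegree_sub_le_of_le hp hq).trans_eq (max_self n))) hn

lemma dvd_of_dvd_sq_of_eval_ne_zero {q r : K[X]} (hr : r.natDegree ≤ 3)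
    (hroot : ∀ t, r.eval t ≠ 0) (h : r ∣ q ^ 2) : r ∣ q := by
  rcases Nat.eq_zero_or_pos r.natDegree with hdeg | hdeg
  · have hr0 : r ≠ 0 := by
      rintro rfl
      simpa using hroot 0
    exact (isUnit_iff_degree_eq_zero.2 ((degree_eq_iff_natDegree_eq hr0).2 hdeg)).dvd
  · exact (irreducible_of_degree_le_three_of_not_isRoot
      (Finset.mem_Icc.2 ⟨hdeg, hr⟩) hroot).prime.dvd_of_dvd_pow h

lemma exists_eq_C_and_eq_C_mul_linear_of_mul_eq_sq {p q r : K[X]} (hp : p.natDegree ≤ 2)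
    (hr : r.natDegree ≤ 3) (hroot : ∀ t, r.eval t ≠ 0) (h : p * r = q ^ 2)
    (hq : ∀ c, q ≠ C c * r) :
    ∃ e a b : K, a ≠ 0 ∧ r = C e ∧ q = C e * (C a * X + C b) := by
  obtain ⟨s, rfl⟩ := dvd_of_dvd_sq_of_eval_ne_zero hr hroot (Dvd.intro_left p h)
  have hr0 : r ≠ 0 := by
    rintro rfl
    simpa using hroot 0
  have hs : s.natDegree ≠ 0 := fun hs => by
    rw [eq_C_of_natDegree_eq_zero hs] at hq
    exact hq _ (mul_comm _ _)
  have hs0 : s ≠ 0 := by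
    rintro rfl
    simp at hs
  have hps : p = r * s ^ 2 := mul_right_cancel₀ hr0 (by linear_combination h)
  rw [hps, natDegree_mul hr0 (pow_ne_zero 2 hs0), natDegree_pow] at hp
  obtain ⟨a, b, rfl⟩ := exists_eq_X_add_C_of_natDegree_le_one (p := s) (by lia)
  refine ⟨r.coeff 0, a, b, ?_, eq_C_of_natDegree_eq_zero (by lia), ?_⟩
  · rintro rfl
    simp at hs
  · rw [← eq_C_of_natDegree_eq_zero (by lia)]

end Polynomials

section Projectivities

variable {F : Type} [Field F]

lemma projAct_mul (A B : GL (Fin 4) F) : projAct F (A * B) = projAct F B ∘ projAct F A := by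
  funext W
  simp only [projAct, Function.comp_apply, ← Submodule.map_comp, Units.val_mul]
  congr 1
  exact LinearMap.ext fun v => by simp

lemma projAct_mul_apply (A B : GL (Fin 4) F) (W : Submodule F (Fin 4 → F)) :
    projAct F (A * B) W = projAct F B (projAct F A W) :=
  congrFun (projAct_mul A B) W

lemma projAct_one : projAct F 1 = id := by
  funext W
  have hlin : vecMulLinear (1 : Matrix (Fin 4) (Fin 4) F) = LinearMap.id :=
    LinearMap.ext fun v => by simp
  rw [projAct, Units.val_one, hlin, Submodule.map_id, id]

lemma projAct_inv_projAct (A : GL (Fin 4) F) (W : Submodule F (Fin 4 → F)) :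
    projAct F A⁻¹ (projAct F A W) = W := by
  rw [← projAct_mul_apply, mul_inv_cancel, projAct_one, id]

lemma projAct_projAct_inv (A : GL (Fin 4) F) (W : Submodule F (Fin 4 → F)) :
    projAct F A (projAct F A⁻¹ W) = W := by
  rw [← projAct_mul_apply, inv_mul_cancel, projAct_one, id]

lemma projAct_injective (A : GL (Fin 4) F) : Function.Injective (projAct F A) :=
  Function.LeftInverse.injective (projAct_inv_projAct A)

lemma projAct_eq_of_val_eq_smul {A B : GL (Fin 4) F} {k : F} (hk : k ≠ 0)
    (h : A.val = k • B.val) : projAct F A = projAct F B := by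
  funext W
  have hlin : vecMulLinear A.val = k • vecMulLinear B.val :=
    LinearMap.ext fun v => by simp [h]
  rw [projAct, hlin, Submodule.map_smul _ _ _ hk, projAct]

lemma projAct_span_singleton (A : GL (Fin 4) F) (v : Fin 4 → F) :
    projAct F A (span F {v}) = span F {v ᵥ* A.val} := by
  rw [projAct, Submodule.map_span, Set.image_singleton, vecMulLinear_apply]

lemma projAct_span_pair (A : GL (Fin 4) F) (v w : Fin 4 → F) :
    projAct F A (span F {v, w}) = span F {v ᵥ* A.val, w ᵥ* A.val} := by
  rw [projAct, Submodule.map_span, Set.image_pair, vecMulLinear_apply, vecMulLinear_apply]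

end Projectivities

section CubicVectors

open Polynomial Cardinal

/-- The vector `(t³, t², t, 1)` representing the point `P(t)` of the twisted cubic. -/
def cubicVec {R : Type*} [CommRing R] (t : R) : Fin 4 → R := ![t ^ 3, t ^ 2, t, 1]

/-- The `j`-th coordinate of `cubicVec t ᵥ* M` as a polynomial in `t`: the cubic whose coefficients,
from the leading one down, form the `j`-th column of `M`. -/
def columnCubic {R : Type*} [CommRing R] (M : Matrix (Fin 4) (Fin 4) R) (j : Fin 4) : Cubic R :=
  ⟨M 0 j, M 1 j, M 2 j, M 3 j⟩

lemma eval_columnCubic {R : Type*} [CommRing R] (M : Matrix (Fin 4) (Fin 4) R) (j : Fin 4)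
    (t : R) : (columnCubic M j).toPoly.eval t = (cubicVec t ᵥ* M) j := by
  simp only [Cubic.toPoly, columnCubic, eval_add, eval_mul, eval_C, eval_pow, eval_X, vecMul,
    dotProduct, cubicVec, Fin.sum_univ_four, cons_val]
  ring

lemma coeff_columnCubic {R : Type*} [CommRing R] (M : Matrix (Fin 4) (Fin 4) R) (i j : Fin 4) :
    (columnCubic M j).toPoly.coeff i.rev = M i j := by
  fin_cases i
  exacts [Cubic.coeff_eq_a, Cubic.coeff_eq_b, Cubic.coeff_eq_c, Cubic.coeff_eq_d]

lemma matrix_eq_of_forall_cubicVec_vecMul_eq {K : Type*} [Field K] (hK : 3 < #K)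
    {M N : Matrix (Fin 4) (Fin 4) K} (h : ∀ t, cubicVec t ᵥ* M = cubicVec t ᵥ* N) : M = N := by
  ext i j
  have hcol : (columnCubic M j).toPoly = (columnCubic N j).toPoly :=
    eq_of_natDegree_le_of_forall_eval_eq natDegree_cubic_le natDegree_cubic_le
      (by exact_mod_cast hK) fun t => by rw [eval_columnCubic, eval_columnCubic, h]
  rw [← coeff_columnCubic M, hcol, coeff_columnCubic]

lemma toPoly_columnCubic_ne_C_mul {R : Type*} [CommRing R] [Nontrivial R]
    {M : Matrix (Fin 4) (Fin 4) R} (hM : IsUnit M) {j k : Fin 4} (hjk : j ≠ k) (c : R) :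
    (columnCubic M j).toPoly ≠ C c * (columnCubic M k).toPoly := fun h => by
  have hentry (i : Fin 4) : M i j = c * M i k := by
    rw [← coeff_columnCubic M i j, h, coeff_C_mul, coeff_columnCubic]
  have hmulVec : M *ᵥ Pi.single j 1 = M *ᵥ Pi.single k c := by
    ext i
    simp [hentry i, mul_comm]
  simpa [hjk] using congrFun (mulVec_injective_of_isUnit hM hmulVec) j

end CubicVectors

section CubicPoints

variable {F : Type} [Field F]

/-- The point `P(t)` of the twisted cubic. -/
def cubicPoint (t : F) : Submodule F (Fin 4 → F) := span F {cubicVec t}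

/-- The point `P(∞)` of the twisted cubic. -/
def cubicPointInf (F : Type) [Field F] : Submodule F (Fin 4 → F) := span F {![1, 0, 0, 0]}

lemma mem_twistedCubic_iff {W : Submodule F (Fin 4 → F)} :
    W ∈ twistedCubic F ↔ (∃ t, W = cubicPoint t) ∨ W = cubicPointInf F := by
  constructor
  · rintro ⟨_, ⟨t, rfl⟩ | rfl, rfl⟩
    exacts [.inl ⟨t, rfl⟩, .inr rfl]
  · rintro (⟨t, rfl⟩ | rfl)
    exacts [⟨_, .inl ⟨t, rfl⟩, rfl⟩, ⟨_, .inr rfl, rfl⟩]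

lemma cubicPoint_mem_twistedCubic (t : F) : cubicPoint t ∈ twistedCubic F :=
  mem_twistedCubic_iff.2 (.inl ⟨t, rfl⟩)

lemma cubicPointInf_mem_twistedCubic : cubicPointInf F ∈ twistedCubic F :=
  mem_twistedCubic_iff.2 (.inr rfl)

lemma cubicPoint_injective : Function.Injective (cubicPoint : F → _) := fun s t h => by
  obtain ⟨c, hc⟩ := span_singleton_eq_span_singleton.1 h
  have hc1 : c = 1 := by simpa [cubicVec, Units.smul_def] using congrFun hc 3
  simpa [cubicVec, hc1] using congrFun hc 2

lemma cubicPoint_ne_cubicPointInf (t : F) : cubicPoint t ≠ cubicPointInf F := fun h => by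
  obtain ⟨c, hc⟩ := span_singleton_eq_span_singleton.1 h
  simpa [cubicVec, Units.smul_def] using congrFun hc 3

end CubicPoints

section CubicGroup

variable {F : Type} [Field F]

/-- The group of matrices whose projectivities map the twisted cubic onto itself. The set `Gq` of
these projectivities is its quotient by the scalar matrices. -/
def cubicGroup (F : Type) [Field F] : Subgroup (GL (Fin 4) F) where
  carrier := {A | projAct F A '' twistedCubic F = twistedCubic F}
  one_mem' := by simp [projAct_one]
  mul_mem' {A B} hA hB := by
    rw [Set.mem_ofPred_eq] at hA hB ⊢
    rw [projAct_mul, Set.image_comp, hA, hB]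
  inv_mem' {A} hA := by
    rw [Set.mem_ofPred_eq] at hA ⊢
    conv_lhs =>
      rw [← hA, ← Set.image_comp, ← projAct_mul, mul_inv_cancel, projAct_one, Set.image_id]

lemma projAct_mem_Gq {A : GL (Fin 4) F} (hA : A ∈ cubicGroup F) : projAct F A ∈ Gq F :=
  ⟨⟨A, rfl⟩, hA⟩

lemma projAct_mem_twistedCubic {A : GL (Fin 4) F} (hA : A ∈ cubicGroup F)
    {W : Submodule F (Fin 4 → F)} (hW : W ∈ twistedCubic F) : projAct F A W ∈ twistedCubic F :=
  hA.subset (Set.mem_image_of_mem _ hW)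

lemma mem_cubicGroup_of_mapsTo {A : GL (Fin 4) F}
    (h : Set.MapsTo (projAct F A) (twistedCubic F) (twistedCubic F))
    (hinv : Set.MapsTo (projAct F A⁻¹) (twistedCubic F) (twistedCubic F)) :
    A ∈ cubicGroup F :=
  h.image_subset.antisymm fun W hW => ⟨_, hinv hW, projAct_projAct_inv A W⟩

lemma conj_mem_lineStab {g : GL (Fin 4) F} (hg : g ∈ cubicGroup F)
    {ℓ : Submodule F (Fin 4 → F)} {f : Submodule F (Fin 4 → F) → Submodule F (Fin 4 → F)}
    (hf : f ∈ lineStab F ℓ) :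
    projAct F g ∘ f ∘ projAct F g⁻¹ ∈ lineStab F (projAct F g ℓ) := by
  obtain ⟨⟨⟨A, rfl⟩, hA⟩, hℓ⟩ := hf
  constructor
  · rw [← projAct_mul, ← projAct_mul]
    exact projAct_mem_Gq (mul_mem (mul_mem (inv_mem hg) hA) hg)
  · simp only [Function.comp_apply, projAct_inv_projAct, hℓ]

open Cardinal in
lemma mk_lineStab_projAct {g : GL (Fin 4) F} (hg : g ∈ cubicGroup F)
    (ℓ : Submodule F (Fin 4 → F)) : #(lineStab F (projAct F g ℓ)) = #(lineStab F ℓ) :=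
  mk_congr
    { toFun f := ⟨projAct F g⁻¹ ∘ f ∘ projAct F g, by
        simpa only [inv_inv, projAct_inv_projAct] using conj_mem_lineStab (inv_mem hg) f.2⟩
      invFun f := ⟨projAct F g ∘ f ∘ projAct F g⁻¹, conj_mem_lineStab hg f.2⟩
      left_inv f := by ext1; funext W; simp [projAct_projAct_inv]
      right_inv f := by ext1; funext W; simp [projAct_inv_projAct] }

end CubicGroup

section Generators

/-- The matrix acting on the twisted cubic by the substitution `t ↦ (t + b) / d`. -/
def affineMatrix {R : Type*} [CommRing R] (b d : R) : Matrix (Fin 4) (Fin 4) R :=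
  !![1, 0, 0, 0;
     3 * b, d, 0, 0;
     3 * b ^ 2, 2 * b * d, d ^ 2, 0;
     b ^ 3, b ^ 2 * d, b * d ^ 2, d ^ 3]

lemma affineMatrix_mul {R : Type*} [CommRing R] (b d b' d' : R) :
    affineMatrix b d * affineMatrix b' d' = affineMatrix (b + d * b') (d * d') := by
  ext i j
  fin_cases i <;> fin_cases j <;> simp [affineMatrix, mul_apply, Fin.sum_univ_four] <;> ring

lemma affineMatrix_zero_one {R : Type*} [CommRing R] : affineMatrix (0 : R) 1 = 1 := by
  ext i j
  fin_cases i <;> fin_cases j <;> simp [affineMatrix]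

variable {F : Type} [Field F]

/-- `affineMatrix b d` as an invertible matrix; its inverse substitutes `d * t - b` for `t`. -/
def affineGL (b : F) (d : Fˣ) : GL (Fin 4) F where
  val := affineMatrix b d
  inv := affineMatrix (-(b / d)) ↑d⁻¹
  val_inv := by
    rw [affineMatrix_mul, ← affineMatrix_zero_one]
    congr 1 <;> simp [mul_div_cancel₀]
  inv_val := by
    rw [affineMatrix_mul, ← affineMatrix_zero_one]
    congr 1 <;> simp [div_eq_inv_mul]

lemma affineGL_inv (b : F) (d : Fˣ) : (affineGL b d)⁻¹ = affineGL (-(b / d)) d⁻¹ :=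
  Units.ext rfl

lemma cubicVec_vecMul_affineGL (b t : F) (d : Fˣ) :
    cubicVec t ᵥ* (affineGL b d).val = (d : F) ^ 3 • cubicVec ((t + b) / d) := by
  have hd := d.ne_zero
  ext i
  fin_cases i <;>
    simp [affineGL, affineMatrix, cubicVec, vecMul, dotProduct, Fin.sum_univ_four] <;>
    field_simp <;> ring

lemma projAct_affineGL_cubicPoint (b t : F) (d : Fˣ) :
    projAct F (affineGL b d) (cubicPoint t) = cubicPoint ((t + b) / d) := by
  rw [cubicPoint, projAct_span_singleton, cubicVec_vecMul_affineGL,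
    span_singleton_smul_eq (d.isUnit.pow 3), cubicPoint]

lemma projAct_affineGL_cubicPointInf (b : F) (d : Fˣ) :
    projAct F (affineGL b d) (cubicPointInf F) = cubicPointInf F := by
  rw [cubicPointInf, projAct_span_singleton]
  simp [affineGL, affineMatrix]

lemma mapsTo_projAct_affineGL (b : F) (d : Fˣ) :
    Set.MapsTo (projAct F (affineGL b d)) (twistedCubic F) (twistedCubic F) := by
  intro W hW
  obtain ⟨t, rfl⟩ | rfl := mem_twistedCubic_iff.1 hW
  · exact projAct_affineGL_cubicPoint b t d ▸ cubicPoint_mem_twistedCubic _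
  · exact (projAct_affineGL_cubicPointInf b d).symm ▸ cubicPointInf_mem_twistedCubic

lemma affineGL_mem_cubicGroup (b : F) (d : Fˣ) : affineGL b d ∈ cubicGroup F :=
  mem_cubicGroup_of_mapsTo (mapsTo_projAct_affineGL b d)
    (affineGL_inv b d ▸ mapsTo_projAct_affineGL _ _)

lemma projAct_affineGL_injective :
    Function.Injective fun p : F × Fˣ => projAct F (affineGL p.1 p.2) := by
  rintro ⟨b, d⟩ ⟨b', d'⟩ h
  have key (t : F) : (t + b) / d = (t + b') / d' := cubicPoint_injective <| by
    simpa only [projAct_affineGL_cubicPoint] using congrFun h (cubicPoint t)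
  obtain rfl : b = b' := by
    simpa [neg_add_eq_zero] using (key (-b)).symm
  obtain rfl : d = d' := Units.ext <| by
    simpa using key (1 - b)
  rfl

/-- The antidiagonal matrix, acting on the twisted cubic by the substitution `t ↦ 1 / t`. -/
def reversalMatrix (R : Type*) [CommRing R] : Matrix (Fin 4) (Fin 4) R :=
  !![0, 0, 0, 1; 0, 0, 1, 0; 0, 1, 0, 0; 1, 0, 0, 0]

lemma reversalMatrix_mul_self {R : Type*} [CommRing R] :
    reversalMatrix R * reversalMatrix R = 1 := by
  ext i j
  fin_cases i <;> fin_cases j <;> simp [reversalMatrix]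

/-- `reversalMatrix` as an invertible matrix. -/
def reversalGL (F : Type) [Field F] : GL (Fin 4) F :=
  ⟨reversalMatrix F, reversalMatrix F, reversalMatrix_mul_self, reversalMatrix_mul_self⟩

lemma reversalGL_inv : (reversalGL F)⁻¹ = reversalGL F := Units.ext rfl

lemma vecMul_reversalGL (x y z w : F) : ![x, y, z, w] ᵥ* (reversalGL F).val = ![w, z, y, x] := by
  ext i
  fin_cases i <;> simp [reversalGL, reversalMatrix, vecMul, dotProduct, Fin.sum_univ_four]

lemma projAct_reversalGL_cubicPointInf :
    projAct F (reversalGL F) (cubicPointInf F) = cubicPoint 0 := by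
  simp [cubicPointInf, projAct_span_singleton, vecMul_reversalGL, cubicPoint, cubicVec]

lemma projAct_reversalGL_cubicPoint_zero :
    projAct F (reversalGL F) (cubicPoint 0) = cubicPointInf F := by
  simp [cubicPointInf, projAct_span_singleton, vecMul_reversalGL, cubicPoint, cubicVec]

lemma projAct_reversalGL_cubicPoint {t : F} (ht : t ≠ 0) :
    projAct F (reversalGL F) (cubicPoint t) = cubicPoint t⁻¹ := by
  have hsmul : ![1, t, t ^ 2, t ^ 3] = t ^ 3 • cubicVec t⁻¹ := by
    ext i
    fin_cases i <;> simp [cubicVec] <;> field_simp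
  rw [cubicPoint, projAct_span_singleton, cubicVec, vecMul_reversalGL, hsmul,
    span_singleton_smul_eq (IsUnit.mk0 _ (pow_ne_zero 3 ht)), cubicPoint]

lemma reversalGL_mem_cubicGroup : reversalGL F ∈ cubicGroup F := by
  have hmaps : Set.MapsTo (projAct F (reversalGL F)) (twistedCubic F) (twistedCubic F) := by
    intro W hW
    obtain ⟨t, rfl⟩ | rfl := mem_twistedCubic_iff.1 hW
    · rcases eq_or_ne t 0 with rfl | ht
      · exact projAct_reversalGL_cubicPoint_zero (F := F) ▸ cubicPointInf_mem_twistedCubic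
      · exact projAct_reversalGL_cubicPoint ht ▸ cubicPoint_mem_twistedCubic _
    · exact projAct_reversalGL_cubicPointInf (F := F) ▸ cubicPoint_mem_twistedCubic _
  exact mem_cubicGroup_of_mapsTo hmaps (reversalGL_inv (F := F) ▸ hmaps)

end Generators

section FixingInfinity

open Polynomial Cardinal

variable {F : Type} [Field F] {A : GL (Fin 4) F}

lemma val_zero_apply_eq_zero_of_projAct_cubicPointInf
    (hinf : projAct F A (cubicPointInf F) = cubicPointInf F) {j : Fin 4} (hj : j ≠ 0) :
    A.val 0 j = 0 := by
  rw [cubicPointInf, projAct_span_singleton] at hinf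
  obtain ⟨c, hc⟩ := span_singleton_eq_span_singleton.1 hinf.symm
  have := congrFun hc j
  fin_cases j <;> simp_all [vecMul, dotProduct, Fin.sum_univ_four, Units.smul_def]

lemma exists_cubicVec_vecMul_eq_smul (hA : A ∈ cubicGroup F)
    (hinf : projAct F A (cubicPointInf F) = cubicPointInf F) (t : F) :
    ∃ c s : F, c ≠ 0 ∧ cubicVec t ᵥ* A.val = c • cubicVec s := by
  obtain ⟨s, hs⟩ | h :=
    mem_twistedCubic_iff.1 (projAct_mem_twistedCubic hA (cubicPoint_mem_twistedCubic t))
  · rw [cubicPoint, projAct_span_singleton] at hs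
    obtain ⟨c, hc⟩ := span_singleton_eq_span_singleton.1 hs.symm
    exact ⟨c, s, c.ne_zero, hc.symm⟩
  · exact absurd (projAct_injective A (h.trans hinf.symm)) (cubicPoint_ne_cubicPointInf t)

lemma exists_cubicVec_vecMul_eq_smul_affine (hF : 5 ≤ #F) (hA : A ∈ cubicGroup F)
    (hinf : projAct F A (cubicPointInf F) = cubicPointInf F) :
    ∃ e a b : F, e ≠ 0 ∧ a ≠ 0 ∧ ∀ t, cubicVec t ᵥ* A.val = e • cubicVec (a * t + b) := by
  choose c s hc hcs using exists_cubicVec_vecMul_eq_smul hA hinf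
  let w (j : Fin 4) : F[X] := (columnCubic A.val j).toPoly
  have hw (j : Fin 4) (t : F) : (w j).eval t = c t * cubicVec (s t) j := by
    rw [eval_columnCubic, hcs, Pi.smul_apply, smul_eq_mul]
  have hw1 (t : F) : (w 1).eval t = c t * s t ^ 2 := hw 1 t
  have hw2 (t : F) : (w 2).eval t = c t * s t := hw 2 t
  have hw3 (t : F) : (w 3).eval t = c t := (hw 3 t).trans (mul_one _)
  have hdeg {j : Fin 4} (hj : j ≠ 0) : (w j).natDegree ≤ 2 :=
    Cubic.natDegree_of_a_eq_zero (val_zero_apply_eq_zero_of_projAct_cubicPointInf hinf hj)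
  have hquadric : w 1 * w 3 = w 2 ^ 2 :=
    eq_of_natDegree_le_of_forall_eval_eq
      (natDegree_mul_le_of_le (hdeg (by decide)) (hdeg (by decide)))
      (natDegree_pow_le_of_le 2 (hdeg (by decide)))
      (lt_of_lt_of_le (by norm_num) hF)
      fun t => by rw [eval_mul, eval_pow, hw1, hw2, hw3]; ring
  obtain ⟨e, a, b, ha, hr, hq⟩ :=
    exists_eq_C_and_eq_C_mul_linear_of_mul_eq_sq (hdeg (by decide))
      ((hdeg (by decide)).trans (by norm_num)) (fun t => hw3 t ▸ hc t) hquadric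
      (toPoly_columnCubic_ne_C_mul A.isUnit (by decide))
  have hce (t : F) : c t = e := by rw [← hw3, hr, eval_C]
  have he : e ≠ 0 := hce 0 ▸ hc 0
  refine ⟨e, a, b, he, ha, fun t => ?_⟩
  have hst : s t = a * t + b := mul_left_cancel₀ he <| by
    simpa [hce, hq] using (hw2 t).symm
  rw [hcs, hce, hst]

lemma exists_projAct_eq_projAct_affineGL (hF : 5 ≤ #F) (hA : A ∈ cubicGroup F)
    (hinf : projAct F A (cubicPointInf F) = cubicPointInf F) :
    ∃ (b : F) (d : Fˣ), projAct F A = projAct F (affineGL b d) := by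
  obtain ⟨e, a, b, he, ha, h⟩ := exists_cubicVec_vecMul_eq_smul_affine hF hA hinf
  refine ⟨b / a, (Units.mk0 a ha)⁻¹, projAct_eq_of_val_eq_smul (k := e * a ^ 3)
    (mul_ne_zero he (pow_ne_zero 3 ha)) ?_⟩
  refine matrix_eq_of_forall_cubicVec_vecMul_eq (lt_of_lt_of_le (by norm_num) hF) fun t => ?_
  have hsubst : (t + b / a) / ↑(Units.mk0 a ha)⁻¹ = a * t + b := by
    rw [Units.val_inv_eq_inv_val, Units.val_mk0]
    field_simp
  have hscalar : e * a ^ 3 * ↑(Units.mk0 a ha)⁻¹ ^ 3 = e := by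
    rw [Units.val_inv_eq_inv_val, Units.val_mk0]
    field_simp
  rw [h, vecMul_smul, cubicVec_vecMul_affineGL, hsubst, smul_smul, hscalar]

end FixingInfinity

section Tangents

open Cardinal

variable {F : Type} [Field F]

lemma tangentAt_injective : Function.Injective (tangentAt F) := fun s t h => by
  have hmem : ![s ^ 3, s ^ 2, s, 1] ∈ tangentAt F t := h ▸ mem_span_of_mem (by simp)
  obtain ⟨x, y, hxy⟩ := mem_span_pair.1 hmem
  have hx : x = 1 := by simpa using congrFun hxy 3
  have hy : t + y = s := by simpa [hx] using congrFun hxy 2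
  have hsq : t ^ 2 + y * (2 * t) = s ^ 2 := by simpa [hx] using congrFun hxy 1
  have hy0 : y = 0 := pow_eq_zero_iff two_ne_zero |>.1 <| by
    rw [← hy] at hsq
    linear_combination -hsq
  rw [← hy, hy0, add_zero]

lemma not_cubicPoint_le_tangentAtInf (t : F) : ¬ cubicPoint t ≤ tangentAtInf F := fun h => by
  obtain ⟨x, y, hxy⟩ := mem_span_pair.1 (h (mem_span_singleton_self _))
  simpa [cubicVec] using congrFun hxy 3

lemma cubicPointInf_le_tangentAtInf : cubicPointInf F ≤ tangentAtInf F :=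
  span_mono (by simp)

lemma cubicPoint_le_tangentAt (t : F) : cubicPoint t ≤ tangentAt F t :=
  span_mono (by simp [cubicVec])

lemma tangentAt_ne_tangentAtInf (t : F) : tangentAt F t ≠ tangentAtInf F := fun h =>
  not_cubicPoint_le_tangentAtInf t (h ▸ cubicPoint_le_tangentAt t)

lemma setOf_isTangent :
    {ℓ | isTangent F ℓ} = insert (tangentAtInf F) (Set.range (tangentAt F)) := by
  ext ℓ
  simp [isTangent, or_comm, eq_comm]

lemma mk_setOf_isTangent : #{ℓ | isTangent F ℓ} = #F + 1 := by
  rw [setOf_isTangent, mk_insert, mk_range_eq _ tangentAt_injective]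
  rintro ⟨t, ht⟩
  exact tangentAt_ne_tangentAtInf t ht

lemma projAct_affineGL_tangentAtInf_le (b : F) (d : Fˣ) :
    projAct F (affineGL b d) (tangentAtInf F) ≤ tangentAtInf F := by
  have h0 : ![1, 0, 0, 0] ᵥ* (affineGL b d).val = ![1, 0, 0, 0] := by
    simp [affineGL, affineMatrix]
  have h1 : ![0, 1, 0, 0] ᵥ* (affineGL b d).val = ![3 * b, d, 0, 0] := by
    simp [affineGL, affineMatrix]
  rw [tangentAtInf, projAct_span_pair, h0, h1, span_le, Set.pair_subset_iff]
  exact ⟨mem_span_of_mem (by simp), mem_span_pair.2 ⟨3 * b, d, by simp⟩⟩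

lemma projAct_affineGL_tangentAtInf (b : F) (d : Fˣ) :
    projAct F (affineGL b d) (tangentAtInf F) = tangentAtInf F := by
  refine (projAct_affineGL_tangentAtInf_le b d).antisymm ?_
  have hinv : projAct F (affineGL b d)⁻¹ (tangentAtInf F) ≤ tangentAtInf F :=
    affineGL_inv b d ▸ projAct_affineGL_tangentAtInf_le _ _
  exact (projAct_projAct_inv _ _).symm.trans_le (map_mono hinv)

/-- A projectivity of the cubic, `t ↦ 1 / t` followed by a translation, moving `P(∞)` to `P(t)`. -/
def infTo (t : F) : GL (Fin 4) F := reversalGL F * affineGL t 1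

lemma infTo_mem_cubicGroup (t : F) : infTo t ∈ cubicGroup F :=
  mul_mem reversalGL_mem_cubicGroup (affineGL_mem_cubicGroup t 1)

lemma projAct_infTo_cubicPointInf (t : F) :
    projAct F (infTo t) (cubicPointInf F) = cubicPoint t := by
  rw [infTo, projAct_mul_apply, projAct_reversalGL_cubicPointInf, projAct_affineGL_cubicPoint]
  simp

lemma projAct_infTo_tangentAtInf (t : F) :
    projAct F (infTo t) (tangentAtInf F) = tangentAt F t := by
  rw [infTo, projAct_mul_apply, tangentAtInf, projAct_span_pair, projAct_span_pair,
    vecMul_reversalGL, vecMul_reversalGL, tangentAt]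
  simp [affineGL, affineMatrix]

lemma projAct_tangentAtInf_of_projAct_cubicPointInf (hF : 5 ≤ #F) {A : GL (Fin 4) F}
    (hA : A ∈ cubicGroup F) (hinf : projAct F A (cubicPointInf F) = cubicPointInf F) :
    projAct F A (tangentAtInf F) = tangentAtInf F := by
  obtain ⟨b, d, h⟩ := exists_projAct_eq_projAct_affineGL hF hA hinf
  rw [h, projAct_affineGL_tangentAtInf]

lemma projAct_cubicPointInf_of_projAct_tangentAtInf {A : GL (Fin 4) F} (hA : A ∈ cubicGroup F)
    (hT : projAct F A (tangentAtInf F) = tangentAtInf F) :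
    projAct F A (cubicPointInf F) = cubicPointInf F := by
  have hle : projAct F A (cubicPointInf F) ≤ tangentAtInf F :=
    (map_mono cubicPointInf_le_tangentAtInf).trans_eq hT
  obtain ⟨t, ht⟩ | h :=
    mem_twistedCubic_iff.1 (projAct_mem_twistedCubic hA cubicPointInf_mem_twistedCubic)
  · exact absurd (ht ▸ hle) (not_cubicPoint_le_tangentAtInf t)
  · exact h

lemma isTangent_projAct_tangentAtInf (hF : 5 ≤ #F) {A : GL (Fin 4) F} (hA : A ∈ cubicGroup F) :
    isTangent F (projAct F A (tangentAtInf F)) := by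
  obtain ⟨t, ht⟩ | h :=
    mem_twistedCubic_iff.1 (projAct_mem_twistedCubic hA cubicPointInf_mem_twistedCubic)
  · have hfix : projAct F (A * (infTo t)⁻¹) (cubicPointInf F) = cubicPointInf F := by
      rw [projAct_mul_apply, ht, ← projAct_infTo_cubicPointInf, projAct_inv_projAct]
    have hT := projAct_tangentAtInf_of_projAct_cubicPointInf hF
      (mul_mem hA (inv_mem (infTo_mem_cubicGroup t))) hfix
    refine .inl ⟨t, ?_⟩
    calc projAct F A (tangentAtInf F)
        = projAct F (A * (infTo t)⁻¹ * infTo t) (tangentAtInf F) := by rw [inv_mul_cancel_right]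
      _ = tangentAt F t := by rw [projAct_mul_apply, hT, projAct_infTo_tangentAtInf]
  · exact .inr (projAct_tangentAtInf_of_projAct_cubicPointInf hF hA h)

lemma exists_mem_cubicGroup_projAct_tangentAtInf_eq {ℓ : Submodule F (Fin 4 → F)}
    (hℓ : isTangent F ℓ) : ∃ g ∈ cubicGroup F, projAct F g (tangentAtInf F) = ℓ := by
  obtain ⟨t, rfl⟩ | rfl := hℓ
  · exact ⟨infTo t, infTo_mem_cubicGroup t, projAct_infTo_tangentAtInf t⟩
  · exact ⟨1, one_mem _, by rw [projAct_one, id]⟩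

lemma setOf_isTangent_eq_lineOrbit (hF : 5 ≤ #F) :
    {ℓ | isTangent F ℓ} = lineOrbit F (tangentAtInf F) := by
  ext ℓ
  constructor
  · intro hℓ
    obtain ⟨g, hg, hgℓ⟩ := exists_mem_cubicGroup_projAct_tangentAtInf_eq hℓ
    exact ⟨_, projAct_mem_Gq hg, hgℓ⟩
  · rintro ⟨_, ⟨⟨A, rfl⟩, hA⟩, rfl⟩
    exact isTangent_projAct_tangentAtInf hF hA

lemma lineStab_tangentAtInf (hF : 5 ≤ #F) :
    lineStab F (tangentAtInf F) =
      Set.range fun p : F × Fˣ => projAct F (affineGL p.1 p.2) := by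
  ext f
  constructor
  · rintro ⟨⟨⟨A, rfl⟩, hA⟩, hT⟩
    obtain ⟨b, d, h⟩ := exists_projAct_eq_projAct_affineGL hF hA
      (projAct_cubicPointInf_of_projAct_tangentAtInf hA hT)
    exact ⟨(b, d), h.symm⟩
  · rintro ⟨⟨b, d⟩, rfl⟩
    exact ⟨projAct_mem_Gq (affineGL_mem_cubicGroup b d), projAct_affineGL_tangentAtInf b d⟩

lemma mk_lineStab_of_isTangent (hF : 5 ≤ #F) {ℓ : Submodule F (Fin 4 → F)}
    (hℓ : isTangent F ℓ) : #(lineStab F ℓ) = #F * #Fˣ := by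
  obtain ⟨g, hg, rfl⟩ := exists_mem_cubicGroup_projAct_tangentAtInf_eq hℓ
  rw [mk_lineStab_projAct hg, lineStab_tangentAtInf hF, mk_range_eq _ projAct_affineGL_injective,
    mk_prod, lift_id, lift_id]

lemma range_projAct_affineGL :
    (Set.range fun p : F × Fˣ => projAct F (affineGL p.1 p.2)) =
      {f | ∃ b d : F, d ≠ 0 ∧ ∃ A : GL (Fin 4) F, A.val = affineMatrix b d ∧ f = projAct F A} := by
  ext f
  constructor
  · rintro ⟨⟨b, d⟩, rfl⟩
    exact ⟨b, d, d.ne_zero, affineGL b d, rfl, rfl⟩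
  · rintro ⟨b, d, hd, A, hA, rfl⟩
    exact ⟨(b, Units.mk0 d hd), congrArg (projAct F) (Units.ext hA.symm)⟩

end Tangents

open Cardinal in
theorem stmt_3_general (F : Type) [Field F] (hF : 5 ≤ #F) :
    #{ℓ : Submodule F (Fin 4 → F) | isTangent F ℓ} = #F + 1 ∧
    {ℓ : Submodule F (Fin 4 → F) | isTangent F ℓ} = lineOrbit F (tangentAtInf F) ∧
    (∀ ℓ : Submodule F (Fin 4 → F), isTangent F ℓ → #(lineStab F ℓ) = #F * #Fˣ) ∧
    lineStab F (tangentAtInf F) =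
      {f | ∃ b d : F, d ≠ 0 ∧ ∃ A : GL (Fin 4) F,
        (↑A : Matrix (Fin 4) (Fin 4) F) =
          !![1, 0, 0, 0;
             3 * b, d, 0, 0;
             3 * b ^ 2, 2 * b * d, d ^ 2, 0;
             b ^ 3, b ^ 2 * d, b * d ^ 2, d ^ 3] ∧
        f = projAct F A} :=
  ⟨mk_setOf_isTangent, setOf_isTangent_eq_lineOrbit hF, fun _ => mk_lineStab_of_isTangent hF,
    (lineStab_tangentAtInf hF).trans range_projAct_affineGL⟩

theorem stmt_3 (q : ℕ) (F : Type) [Field F] [Fintype F]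
    (hcard : Fintype.card F = q) (hq : 5 ≤ q) :
    {ℓ : Submodule F (Fin 4 → F) | isTangent F ℓ}.ncard = q + 1 ∧
    {ℓ : Submodule F (Fin 4 → F) | isTangent F ℓ} = lineOrbit F (tangentAtInf F) ∧
    (∀ ℓ : Submodule F (Fin 4 → F), isTangent F ℓ → (lineStab F ℓ).ncard = q * (q - 1)) ∧
    lineStab F (tangentAtInf F) =
      {f | ∃ b d : F, d ≠ 0 ∧ ∃ A : GL (Fin 4) F,
        (↑A : Matrix (Fin 4) (Fin 4) F) =
          !![1, 0, 0, 0;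
             3 * b, d, 0, 0;
             3 * b ^ 2, 2 * b * d, d ^ 2, 0;
             b ^ 3, b ^ 2 * d, b * d ^ 2, d ^ 3] ∧
        f = projAct F A} := by
  subst hcard
  obtain ⟨hcount, horbit, hstab, hmatrices⟩ :=
    stmt_3_general F (by rw [Cardinal.mk_fintype]; exact_mod_cast hq)
  refine ⟨?_, horbit, fun ℓ hℓ => ?_, hmatrices⟩
  · rw [← Nat.card_coe_set_eq, Nat.card, hcount]
    simp
  · classical
    rw [← Nat.card_coe_set_eq, Nat.card, hstab ℓ hℓ]
    simp [Fintype.card_units]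
end

section
/- Let q ≢ 0 (mod 3) be a prime power with q ≥ 5. The real axes of the osculating developable Γ of the twisted cubic C form a single orbit of lines under G_q, and the stabilizer in G_q of any real axis has order 2(q−1). Moreover, the line ℓ through (0:0:1:0) and (0:1:0:0) is a real axis, and the stabilizer in G_q of ℓ consists exactly of the projectivities induced by the diagonal matrices diag(1, d, d², d³) with d ∈ F_q^*, together with the antidiagonal matrices with rows (0,0,0,1), (0,0,b,0), (0,b²,0,0), (b³,0,0,0) with b ∈ F_q^*. -/
open Matrix Submodule

/-!
The symmetric cube `GL(2, F) → GL(4, F)` maps the point of the cubic and the osculating plane with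
homogeneous parameter `x` to those with parameter `x g`. When `F` has at least five elements its
image is all of `G_q`: after composing with a symmetric cube, a projectivity preserving the cubic
fixes `P(0)` and `P(∞)`, and the quadrics `x₀x₂ = x₁²`, `x₁x₃ = x₂²` through the cubic then force
its matrix to be a multiple of `diag(1, d, d², d³)`. Since `GL(2, F)` carries the standard basis
to any other basis, it carries the pair of osculating planes at `P(0)` and `P(∞)` to any other
pair, so the real axes form one orbit. In characteristic other than `3` the axis `x₀ = x₃ = 0` lies
on no further osculating plane, so its stabilizer comes from the monomial matrices in `GL(2, F)`,
which up to scalars are `diag(1, d)` and the antidiagonal matrices with entries `1`, `b`.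
-/

open scoped Cardinal

namespace TwistedCubic

section Projectivity

variable {F : Type} [Field F]

lemma projAct_mul (A B : GL (Fin 4) F) : projAct F (A * B) = projAct F B ∘ projAct F A := by
  funext W
  rw [Function.comp_apply, projAct, projAct, projAct, ← Submodule.map_comp, Units.val_mul]
  congr 1
  exact LinearMap.ext fun v => (vecMul_vecMul v A.val B.val).symm

lemma projAct_one : projAct F 1 = id := by
  funext W
  have vecMulLinear_one : vecMulLinear (1 : Matrix (Fin 4) (Fin 4) F) = LinearMap.id :=
    LinearMap.ext vecMul_one
  rw [projAct, Units.val_one, vecMulLinear_one, Submodule.map_id, id]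

lemma leftInverse_projAct_inv (A : GL (Fin 4) F) :
    Function.LeftInverse (projAct F A⁻¹) (projAct F A) := by
  rw [Function.leftInverse_iff_comp, ← projAct_mul, mul_inv_cancel, projAct_one]

lemma rightInverse_projAct_inv (A : GL (Fin 4) F) :
    Function.RightInverse (projAct F A⁻¹) (projAct F A) := by
  rw [Function.RightInverse]
  simpa only [inv_inv] using leftInverse_projAct_inv A⁻¹

lemma projAct_injective (A : GL (Fin 4) F) : Function.Injective (projAct F A) :=
  (leftInverse_projAct_inv A).injective

lemma vecMul_mem_projAct_iff (A : GL (Fin 4) F) {W : Submodule F (Fin 4 → F)} {v : Fin 4 → F} :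
    v ᵥ* A.val ∈ projAct F A W ↔ v ∈ W :=
  (vecMul_injective_of_isUnit A.isUnit).mem_set_image

lemma projAct_eq_of_forall_mem_iff {A : GL (Fin 4) F} {W W' : Submodule F (Fin 4 → F)}
    (h : ∀ v, v ∈ W ↔ v ᵥ* A.val ∈ W') : projAct F A W = W' := by
  ext w
  obtain ⟨v, rfl⟩ := vecMul_surjective_iff_isUnit.2 A.isUnit w
  rw [vecMul_mem_projAct_iff, h]

lemma projAct_inf (A : GL (Fin 4) F) (W W' : Submodule F (Fin 4 → F)) :
    projAct F A (W ⊓ W') = projAct F A W ⊓ projAct F A W' :=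
  Submodule.map_inf _ (vecMul_injective_of_isUnit A.isUnit)

lemma projAct_span_singleton (A : GL (Fin 4) F) (v : Fin 4 → F) :
    projAct F A (span F {v}) = span F {v ᵥ* A.val} := by
  rw [projAct, Submodule.map_span, Set.image_singleton, vecMulLinear_apply]

lemma projAct_eq_of_eq_smul {A B : GL (Fin 4) F} {k : F} (hk : k ≠ 0) (h : A.val = k • B.val) :
    projAct F A = projAct F B := by
  funext W
  refine projAct_eq_of_forall_mem_iff fun v => ?_
  rw [h, vecMul_smul, Submodule.smul_mem_iff _ hk, vecMul_mem_projAct_iff]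

lemma projAct_inv_mem_Gq {A : GL (Fin 4) F} (hA : projAct F A ∈ Gq F) :
    projAct F A⁻¹ ∈ Gq F := by
  refine ⟨⟨A⁻¹, rfl⟩, ?_⟩
  conv_lhs => rw [← hA.2]
  exact (leftInverse_projAct_inv A).image_image _

lemma comp_mem_Gq {f g : Submodule F (Fin 4 → F) → Submodule F (Fin 4 → F)}
    (hf : f ∈ Gq F) (hg : g ∈ Gq F) : f ∘ g ∈ Gq F := by
  obtain ⟨⟨A, rfl⟩, hA⟩ := hf
  obtain ⟨⟨B, rfl⟩, hB⟩ := hg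
  exact ⟨⟨B * A, (projAct_mul B A).symm⟩, by rw [Set.image_comp, hB, hA]⟩

lemma mk_lineStab_apply {f : Submodule F (Fin 4 → F) → Submodule F (Fin 4 → F)} (hf : f ∈ Gq F)
    (ℓ : Submodule F (Fin 4 → F)) : #(lineStab F (f ℓ)) = #(lineStab F ℓ) := by
  obtain ⟨A, rfl⟩ := hf.1
  have hf' := projAct_inv_mem_Gq hf
  have left := leftInverse_projAct_inv A
  have right := rightInverse_projAct_inv A
  exact Cardinal.mk_congr
    { toFun g := ⟨projAct F A⁻¹ ∘ g.1 ∘ projAct F A,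
        comp_mem_Gq hf' (comp_mem_Gq g.2.1 hf), by
          rw [Function.comp_apply, Function.comp_apply, g.2.2, left]⟩
      invFun g := ⟨projAct F A ∘ g.1 ∘ projAct F A⁻¹,
        comp_mem_Gq hf (comp_mem_Gq g.2.1 hf'), by
          rw [Function.comp_apply, Function.comp_apply, left, g.2.2]⟩
      left_inv g := Subtype.ext <| funext fun W => by
        simp only [Function.comp_apply, right _]
      right_inv g := Subtype.ext <| funext fun W => by
        simp only [Function.comp_apply, left _] }

end Projectivity

section SymmetricCube

variable {R : Type*} [CommRing R]

/-- The point `P(x₀/x₁)` of the twisted cubic in homogeneous coordinates: the cubic binary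
monomials evaluated at `x`. -/
def cubicVec (x : Fin 2 → R) : Fin 4 → R :=
  ![x 0 ^ 3, x 0 ^ 2 * x 1, x 0 * x 1 ^ 2, x 1 ^ 3]

/-- The symmetric cube of a `2 × 2` matrix, acting on row vectors; the entries are chosen
so that `cubicVec_vecMul` holds. -/
def symCube : Matrix (Fin 2) (Fin 2) R →* Matrix (Fin 4) (Fin 4) R where
  toFun g :=
    !![g 0 0 ^ 3, g 0 0 ^ 2 * g 0 1, g 0 0 * g 0 1 ^ 2, g 0 1 ^ 3;
       3 * g 0 0 ^ 2 * g 1 0, g 0 0 ^ 2 * g 1 1 + 2 * g 0 0 * g 1 0 * g 0 1,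
         2 * g 0 0 * g 0 1 * g 1 1 + g 1 0 * g 0 1 ^ 2, 3 * g 0 1 ^ 2 * g 1 1;
       3 * g 0 0 * g 1 0 ^ 2, 2 * g 0 0 * g 1 0 * g 1 1 + g 1 0 ^ 2 * g 0 1,
         g 0 0 * g 1 1 ^ 2 + 2 * g 1 0 * g 0 1 * g 1 1, 3 * g 0 1 * g 1 1 ^ 2;
       g 1 0 ^ 3, g 1 0 ^ 2 * g 1 1, g 1 0 * g 1 1 ^ 2, g 1 1 ^ 3]
  map_one' := by
    ext i j
    fin_cases i <;> fin_cases j <;> simp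
  map_mul' g h := by
    ext i j
    fin_cases i <;> fin_cases j <;>
      simp [Matrix.mul_apply, Fin.sum_univ_two, Fin.sum_univ_four] <;> ring

lemma cubicVec_smul (k : R) (x : Fin 2 → R) : cubicVec (k • x) = k ^ 3 • cubicVec x := by
  ext i
  fin_cases i <;> simp [cubicVec] <;> ring

lemma cubicVec_vecMul (x : Fin 2 → R) (g : Matrix (Fin 2) (Fin 2) R) :
    cubicVec (x ᵥ* g) = cubicVec x ᵥ* symCube g := by
  ext i
  fin_cases i <;>
    simp [cubicVec, symCube, vecMul, dotProduct, Fin.sum_univ_two, Fin.sum_univ_four] <;> ring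

lemma symCube_smul (k : R) (g : Matrix (Fin 2) (Fin 2) R) :
    symCube (k • g) = k ^ 3 • symCube g := by
  ext i j
  fin_cases i <;> fin_cases j <;> simp [symCube] <;> ring

lemma symCube_diagonal (d : R) :
    symCube !![1, 0; 0, d] = !![1, 0, 0, 0; 0, d, 0, 0; 0, 0, d ^ 2, 0; 0, 0, 0, d ^ 3] := by
  ext i j
  fin_cases i <;> fin_cases j <;> simp [symCube]

lemma symCube_antidiagonal (b : R) :
    symCube !![0, 1; b, 0] = !![0, 0, 0, 1; 0, 0, b, 0; 0, b ^ 2, 0, 0; b ^ 3, 0, 0, 0] := by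
  ext i j
  fin_cases i <;> fin_cases j <;> simp [symCube]

end SymmetricCube

section BinaryVectors

variable {K : Type*} [Field K]

lemma exists_eq_smul_of_ne_zero {x : Fin 2 → K} (hx : x ≠ 0) :
    ∃ k : K, k ≠ 0 ∧ ((∃ t, x = k • ![t, 1]) ∨ x = k • ![1, 0]) := by
  by_cases hx1 : x 1 = 0
  · have hx0 : x 0 ≠ 0 := fun hx0 => hx (funext (Fin.forall_fin_two.2 ⟨hx0, hx1⟩))
    exact ⟨x 0, hx0, .inr (funext (Fin.forall_fin_two.2 ⟨by simp, by simp [hx1]⟩))⟩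
  · exact ⟨x 1, hx1, .inl ⟨x 0 / x 1,
      funext (Fin.forall_fin_two.2 ⟨by simp [mul_div_cancel₀ _ hx1], by simp⟩)⟩⟩

lemma linearIndependent_pair_of_forall_smul_ne {x y : Fin 2 → K} (hx : x ≠ 0) (hy : y ≠ 0)
    (h : ∀ k : K, k ≠ 0 → k • x ≠ y) : LinearIndependent K ![x, y] := by
  refine (LinearIndependent.pair_iff' hx).2 fun k hk => ?_
  refine h k ?_ hk
  rintro rfl
  exact hy (by rw [← hk, zero_smul])

lemma exists_GL_of_linearIndependent {x y : Fin 2 → K} (h : LinearIndependent K ![x, y]) :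
    ∃ g : GL (Fin 2) K, ![1, 0] ᵥ* g.val = x ∧ ![0, 1] ᵥ* g.val = y := by
  obtain ⟨g, hg⟩ := (linearIndependent_rows_iff_isUnit (A := Matrix.of ![x, y])).1 h
  exact ⟨g, by simp [hg], by simp [hg]⟩

lemma vecMul_ne_zero (g : GL (Fin 2) K) {x : Fin 2 → K} (hx : x ≠ 0) : x ᵥ* g.val ≠ 0 := by
  rw [← zero_vecMul g.val]
  exact (vecMul_injective_of_isUnit g.isUnit).ne hx

end BinaryVectors

section CubicPoints

variable {F : Type} [Field F]

/-- The point of the twisted cubic with homogeneous parameter `x`; it is the zero subspace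
for `x = 0`. -/
def cubicPoint (x : Fin 2 → F) : Submodule F (Fin 4 → F) := span F {cubicVec x}

/-- The projectivity that `g` induces through its symmetric cube. -/
def cubicProj (g : GL (Fin 2) F) : Submodule F (Fin 4 → F) → Submodule F (Fin 4 → F) :=
  projAct F (Units.map symCube g)

lemma cubicPoint_smul {k : F} (hk : k ≠ 0) (x : Fin 2 → F) :
    cubicPoint (k • x) = cubicPoint x := by
  rw [cubicPoint, cubicVec_smul, span_singleton_smul_eq (IsUnit.mk0 _ (pow_ne_zero 3 hk)),
    cubicPoint]

lemma mem_twistedCubic_iff {P : Submodule F (Fin 4 → F)} :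
    P ∈ twistedCubic F ↔ ∃ x ≠ 0, P = cubicPoint x := by
  constructor
  · rintro ⟨v, ⟨t, rfl⟩ | rfl, rfl⟩
    · exact ⟨![t, 1], by simp, by simp [cubicPoint, cubicVec]⟩
    · exact ⟨![1, 0], by simp, by simp [cubicPoint, cubicVec]⟩
  · rintro ⟨x, hx, rfl⟩
    obtain ⟨k, hk, ⟨t, rfl⟩ | rfl⟩ := exists_eq_smul_of_ne_zero hx <;> rw [cubicPoint_smul hk]
    · exact ⟨_, .inl ⟨t, rfl⟩, by simp [cubicPoint, cubicVec]⟩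
    · exact ⟨_, .inr rfl, by simp [cubicPoint, cubicVec]⟩

lemma quadrics_of_span_mem_twistedCubic {v : Fin 4 → F} (hv : span F {v} ∈ twistedCubic F) :
    v 0 * v 2 = v 1 ^ 2 ∧ v 1 * v 3 = v 2 ^ 2 := by
  obtain ⟨x, -, hx⟩ := mem_twistedCubic_iff.1 hv
  obtain ⟨k, rfl⟩ := mem_span_singleton.1 (hx ▸ mem_span_singleton_self v)
  constructor <;> simp [cubicVec] <;> ring

lemma cubicProj_cubicPoint (g : GL (Fin 2) F) (x : Fin 2 → F) :
    cubicProj g (cubicPoint x) = cubicPoint (x ᵥ* g.val) := by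
  rw [cubicProj, cubicPoint, projAct_span_singleton, cubicPoint, cubicVec_vecMul]
  rfl

lemma cubicProj_eq_of_eq_smul {g h : GL (Fin 2) F} {k : F} (hk : k ≠ 0) (hgh : g.val = k • h.val) :
    cubicProj g = cubicProj h := by
  refine projAct_eq_of_eq_smul (pow_ne_zero 3 hk) ?_
  rw [Units.coe_map, Units.coe_map, hgh]
  exact symCube_smul k h.val

lemma mapsTo_cubicProj (g : GL (Fin 2) F) :
    Set.MapsTo (cubicProj g) (twistedCubic F) (twistedCubic F) := by
  intro P hP
  obtain ⟨x, hx, rfl⟩ := mem_twistedCubic_iff.1 hP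
  exact mem_twistedCubic_iff.2 ⟨_, vecMul_ne_zero g hx, cubicProj_cubicPoint g x⟩

lemma cubicProj_mul (g h : GL (Fin 2) F) : cubicProj (g * h) = cubicProj h ∘ cubicProj g := by
  rw [cubicProj, map_mul, projAct_mul, cubicProj, cubicProj]

lemma leftInverse_cubicProj_inv (g : GL (Fin 2) F) :
    Function.LeftInverse (cubicProj g⁻¹) (cubicProj g) := by
  rw [cubicProj, cubicProj, map_inv]
  exact leftInverse_projAct_inv _

lemma rightInverse_cubicProj_inv (g : GL (Fin 2) F) :
    Function.RightInverse (cubicProj g⁻¹) (cubicProj g) := by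
  rw [cubicProj, cubicProj, map_inv]
  exact rightInverse_projAct_inv _

lemma cubicProj_mem_Gq (g : GL (Fin 2) F) : cubicProj g ∈ Gq F :=
  ⟨⟨_, rfl⟩, (mapsTo_cubicProj g).image_subset.antisymm fun P hP =>
    ⟨cubicProj g⁻¹ P, mapsTo_cubicProj g⁻¹ hP, rightInverse_cubicProj_inv g P⟩⟩

end CubicPoints

section OsculatingPlanes

variable {F : Type} [Field F]

/-- The osculating plane at the point of the cubic with homogeneous parameter `x`; it is the whole
space for `x = 0`. -/
def osculatingPlane (x : Fin 2 → F) : Submodule F (Fin 4 → F) :=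
  planeOf F ![x 1 ^ 3, -(3 * x 0 * x 1 ^ 2), 3 * x 0 ^ 2 * x 1, -(x 0 ^ 3)]

lemma mem_osculatingPlane_iff {x : Fin 2 → F} {v : Fin 4 → F} :
    v ∈ osculatingPlane x ↔
      x 1 ^ 3 * v 0 - 3 * x 0 * x 1 ^ 2 * v 1 + 3 * x 0 ^ 2 * x 1 * v 2 - x 0 ^ 3 * v 3 = 0 := by
  simp [osculatingPlane, planeOf, planeForm, sub_eq_add_neg]

lemma osculatingPlane_smul {k : F} (hk : k ≠ 0) (x : Fin 2 → F) :
    osculatingPlane (k • x) = osculatingPlane x := by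
  ext v
  rw [mem_osculatingPlane_iff, mem_osculatingPlane_iff,
    ← mul_eq_zero_iff_left (pow_ne_zero 3 hk) (b := x 1 ^ 3 * v 0 - _ + _ - _)]
  simp only [Pi.smul_apply, smul_eq_mul]
  ring_nf

lemma isOscPlane_iff {π : Submodule F (Fin 4 → F)} :
    isOscPlane F π ↔ ∃ x ≠ 0, π = osculatingPlane x := by
  have osculatingPlane_affine (t : F) : osculatingPlane ![t, 1] = oscPlane F t := by
    simp [osculatingPlane, oscPlane]
  have osculatingPlane_infinity : osculatingPlane ![1, 0] = oscPlaneInf F := by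
    ext v
    simp [mem_osculatingPlane_iff, oscPlaneInf, planeOf, planeForm]
  constructor
  · rintro (⟨t, rfl⟩ | rfl)
    · exact ⟨![t, 1], by simp, (osculatingPlane_affine t).symm⟩
    · exact ⟨![1, 0], by simp, osculatingPlane_infinity.symm⟩
  · rintro ⟨x, hx, rfl⟩
    obtain ⟨k, hk, ⟨t, rfl⟩ | rfl⟩ := exists_eq_smul_of_ne_zero hx <;> rw [osculatingPlane_smul hk]
    · exact .inl ⟨t, osculatingPlane_affine t⟩
    · exact .inr osculatingPlane_infinity

lemma cubicProj_osculatingPlane (g : GL (Fin 2) F) (x : Fin 2 → F) :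
    cubicProj g (osculatingPlane x) = osculatingPlane (x ᵥ* g.val) := by
  refine projAct_eq_of_forall_mem_iff fun v => ?_
  have hdet : g.val.det ≠ 0 := g.det_ne_zero
  rw [mem_osculatingPlane_iff, mem_osculatingPlane_iff, ← mul_eq_zero_iff_left (pow_ne_zero 3 hdet)]
  refine Eq.congr_left ?_
  simp only [det_fin_two, vecMul, dotProduct, Fin.sum_univ_two, Fin.sum_univ_four, symCube,
    Units.coe_map, MonoidHom.coe_mk, OneHom.coe_mk, of_apply, cons_val', cons_val_zero,
    cons_val_fin_one, cons_val_one, cons_val]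
  ring

/-- The form defining the osculating plane at `y` takes the value `(x₀y₁ - x₁y₀)³` at the point
with parameter `x`. -/
lemma cubicVec_mem_osculatingPlane_iff {x y : Fin 2 → F} :
    cubicVec x ∈ osculatingPlane y ↔ x 0 * y 1 = x 1 * y 0 := by
  rw [mem_osculatingPlane_iff, ← sub_eq_zero (a := x 0 * y 1),
    ← pow_eq_zero_iff (a := x 0 * y 1 - x 1 * y 0) three_ne_zero]
  refine Eq.congr_left ?_
  simp only [cubicVec, cons_val_zero, cons_val_one, cons_val]
  ring

lemma mul_eq_mul_of_cubicPoint_eq {x y : Fin 2 → F} (h : cubicPoint x = cubicPoint y) :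
    x 0 * y 1 = x 1 * y 0 := by
  have cubicPoint_le : cubicPoint y ≤ osculatingPlane y :=
    (span_singleton_le_iff_mem _ _).2 (cubicVec_mem_osculatingPlane_iff.2 (mul_comm _ _))
  exact cubicVec_mem_osculatingPlane_iff.1
    (cubicPoint_le (h ▸ mem_span_singleton_self (cubicVec x)))

end OsculatingPlanes

section Classification

open Polynomial in
lemma eq_zero_of_forall_ne_zero_eval_eq_zero {R : Type*} [CommRing R] [IsDomain R] {p : R[X]}
    (hp : (p.natDegree + 1 : ℕ) < #R) (h : ∀ t ≠ 0, p.eval t = 0) : p = 0 := by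
  have X_mul_eq_zero : X * p = 0 := by
    refine eq_zero_of_forall_eval_zero_of_natDegree_lt_card _ (fun t => ?_) (lt_of_le_of_lt ?_ hp)
    · rw [eval_mul, eval_X, mul_eq_zero]
      exact or_iff_not_imp_left.2 (h t)
    · exact_mod_cast natDegree_mul_le.trans (by rw [natDegree_X, add_comm])
  exact (mul_eq_zero.1 X_mul_eq_zero).resolve_left X_ne_zero

lemma cubic_coeffs_eq_zero {R : Type*} [CommRing R] [IsDomain R] (hR : 5 ≤ #R) {a b c d : R}
    (h : ∀ t ≠ 0, a * t ^ 3 + b * t ^ 2 + c * t + d = 0) : a = 0 ∧ b = 0 ∧ c = 0 ∧ d = 0 := by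
  have toPoly_eq_zero : (Cubic.mk a b c d).toPoly = 0 := by
    refine eq_zero_of_forall_ne_zero_eval_eq_zero (lt_of_lt_of_le ?_ hR) fun t ht => ?_
    · have natDegree_le : (Cubic.mk a b c d).toPoly.natDegree ≤ 3 := Polynomial.natDegree_cubic_le
      exact_mod_cast Nat.lt_of_le_of_lt (Nat.succ_le_succ natDegree_le) (by norm_num)
    · simpa [Cubic.toPoly] using h t ht
  simpa using (Cubic.toPoly_injective _ _).1 (toPoly_eq_zero.trans Cubic.of_d_eq_zero'.symm)

variable {F : Type} [Field F]

lemma cubicVec_vecMul_of_rows {M : Matrix (Fin 4) (Fin 4) F} (hrow0 : ∀ j ≠ 0, M 0 j = 0)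
    (hrow3 : ∀ j ≠ 3, M 3 j = 0) (t : F) :
    cubicVec ![t, 1] ᵥ* M =
      ![M 0 0 * t ^ 3 + M 1 0 * t ^ 2 + M 2 0 * t, M 1 1 * t ^ 2 + M 2 1 * t,
        M 1 2 * t ^ 2 + M 2 2 * t, M 1 3 * t ^ 2 + M 2 3 * t + M 3 3] := by
  ext i
  fin_cases i <;>
    simp [cubicVec, vecMul, dotProduct, Fin.sum_univ_four, hrow0, hrow3] <;> ring

lemma coeffs_of_first_quadric (hF : 5 ≤ #F) {M : Matrix (Fin 4) (Fin 4) F}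
    (hrow0 : ∀ j ≠ 0, M 0 j = 0) (hrow3 : ∀ j ≠ 3, M 3 j = 0)
    (h : ∀ t, (cubicVec ![t, 1] ᵥ* M) 0 * (cubicVec ![t, 1] ᵥ* M) 2 =
      (cubicVec ![t, 1] ᵥ* M) 1 ^ 2) :
    M 0 0 * M 1 2 = 0 ∧ M 0 0 * M 2 2 + M 1 0 * M 1 2 - M 1 1 ^ 2 = 0 ∧
      M 1 0 * M 2 2 + M 2 0 * M 1 2 - 2 * M 1 1 * M 2 1 = 0 ∧
      M 2 0 * M 2 2 - M 2 1 ^ 2 = 0 := by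
  refine cubic_coeffs_eq_zero hF fun t ht => ?_
  have quadric := h t
  simp only [cubicVec_vecMul_of_rows hrow0 hrow3, cons_val] at quadric
  refine (mul_eq_zero.1 ?_).resolve_left (pow_ne_zero 2 ht)
  linear_combination quadric

lemma coeffs_of_second_quadric (hF : 5 ≤ #F) {M : Matrix (Fin 4) (Fin 4) F}
    (hrow0 : ∀ j ≠ 0, M 0 j = 0) (hrow3 : ∀ j ≠ 3, M 3 j = 0)
    (h : ∀ t, (cubicVec ![t, 1] ᵥ* M) 1 * (cubicVec ![t, 1] ᵥ* M) 3 =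
      (cubicVec ![t, 1] ᵥ* M) 2 ^ 2) :
    M 1 1 * M 1 3 - M 1 2 ^ 2 = 0 ∧ M 1 1 * M 2 3 + M 2 1 * M 1 3 - 2 * M 1 2 * M 2 2 = 0 ∧
      M 1 1 * M 3 3 + M 2 1 * M 2 3 - M 2 2 ^ 2 = 0 ∧ M 2 1 * M 3 3 = 0 := by
  refine cubic_coeffs_eq_zero hF fun t ht => ?_
  have quadric := h t
  simp only [cubicVec_vecMul_of_rows hrow0 hrow3, cons_val] at quadric
  refine (mul_eq_zero.1 ?_).resolve_left ht
  linear_combination quadric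

lemma exists_eq_smul_symCube_diagonal (hF : 5 ≤ #F) {M : Matrix (Fin 4) (Fin 4) F} (hM : M.det ≠ 0)
    (hrow0 : ∀ j ≠ 0, M 0 j = 0) (hrow3 : ∀ j ≠ 3, M 3 j = 0)
    (h : ∀ t, span F {cubicVec ![t, 1] ᵥ* M} ∈ twistedCubic F) :
    ∃ k d : F, k ≠ 0 ∧ d ≠ 0 ∧ M = k • symCube !![1, 0; 0, d] := by
  have h00 : M 0 0 ≠ 0 := fun h00 => hM <| det_eq_zero_of_row_eq_zero 0 fun j => by
    by_cases hj : j = 0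
    exacts [hj ▸ h00, hrow0 j hj]
  have h33 : M 3 3 ≠ 0 := fun h33 => hM <| det_eq_zero_of_row_eq_zero 3 fun j => by
    by_cases hj : j = 3
    exacts [hj ▸ h33, hrow3 j hj]
  have quadrics t := quadrics_of_span_mem_twistedCubic (h t)
  obtain ⟨h12, h22, h10, h20⟩ := coeffs_of_first_quadric hF hrow0 hrow3 fun t => (quadrics t).1
  obtain ⟨h13, h23, h11_33, h21⟩ := coeffs_of_second_quadric hF hrow0 hrow3 fun t => (quadrics t).2
  replace h12 : M 1 2 = 0 := (mul_eq_zero.1 h12).resolve_left h00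
  replace h21 : M 2 1 = 0 := (mul_eq_zero.1 h21).resolve_right h33
  have h11 : M 1 1 ≠ 0 := fun h11 => hM <| det_eq_zero_of_column_eq_zero 1 fun i => by
    fin_cases i
    exacts [hrow0 1 (by decide), h11, h21, hrow3 1 (by decide)]
  rw [h12, mul_zero, add_zero] at h22
  replace h22 : M 2 2 = M 1 1 ^ 2 / M 0 0 := by
    rw [eq_div_iff h00]
    linear_combination h22
  have h22_ne : M 2 2 ≠ 0 := h22 ▸ div_ne_zero (pow_ne_zero 2 h11) h00
  replace h10 : M 1 0 = 0 := by simpa [h12, h21, h22_ne] using h10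
  replace h20 : M 2 0 = 0 := by simpa [h21, h22_ne] using h20
  replace h13 : M 1 3 = 0 := by simpa [h12, h11] using h13
  replace h23 : M 2 3 = 0 := by simpa [h12, h21, h11] using h23
  replace h33 : M 3 3 = M 1 1 ^ 3 / M 0 0 ^ 2 := by
    refine mul_left_cancel₀ h11 (?_ : _ = M 1 1 * (M 1 1 ^ 3 / M 0 0 ^ 2))
    rw [h21, h22] at h11_33
    linear_combination h11_33
  refine ⟨M 0 0, M 1 1 / M 0 0, h00, div_ne_zero h11 h00, ?_⟩
  rw [symCube_diagonal]
  ext i j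
  fin_cases i <;> fin_cases j <;> simp [*] <;> field_simp

/-- The monomial matrices of `GL(2, F)` up to scalars: `diag(1, d)` for `Sum.inl d`, and the
antidiagonal matrix with entries `1` and `b` for `Sum.inr b`. -/
def monomialGL : Fˣ ⊕ Fˣ → GL (Fin 2) F :=
  Sum.elim (fun d => GeneralLinearGroup.mkOfDetNeZero !![1, 0; 0, d.val] (by simp))
    (fun b => GeneralLinearGroup.mkOfDetNeZero !![0, 1; b.val, 0] (by simp))

lemma exists_cubicProj_eq_on_base {A : GL (Fin 4) F}
    (hA : Set.MapsTo (projAct F A) (twistedCubic F) (twistedCubic F)) :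
    ∃ g : GL (Fin 2) F,
      projAct F A (cubicPoint ![1, 0]) = cubicProj g (cubicPoint ![1, 0]) ∧
      projAct F A (cubicPoint ![0, 1]) = cubicProj g (cubicPoint ![0, 1]) := by
  obtain ⟨x, hx, hAx⟩ := mem_twistedCubic_iff.1 <|
    hA (mem_twistedCubic_iff.2 ⟨![1, 0], by simp, rfl⟩)
  obtain ⟨y, hy, hAy⟩ := mem_twistedCubic_iff.1 <|
    hA (mem_twistedCubic_iff.2 ⟨![0, 1], by simp, rfl⟩)
  have independent : LinearIndependent F ![x, y] := by
    refine linearIndependent_pair_of_forall_smul_ne hx hy fun k hk hxy => ?_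
    rw [← hxy, cubicPoint_smul hk, ← hAx] at hAy
    simpa using mul_eq_mul_of_cubicPoint_eq (projAct_injective A hAy)
  obtain ⟨g, rfl, rfl⟩ := exists_GL_of_linearIndependent independent
  exact ⟨g, hAx.trans (cubicProj_cubicPoint g _).symm, hAy.trans (cubicProj_cubicPoint g _).symm⟩

lemma vecMul_cubicVec_eq_zero_of_projAct_cubicPoint_eq {B : GL (Fin 4) F} {x : Fin 2 → F}
    (hB : projAct F B (cubicPoint x) = cubicPoint x) {j : Fin 4} (hj : cubicVec x j = 0) :
    (cubicVec x ᵥ* B.val) j = 0 := by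
  have image_mem : cubicVec x ᵥ* B.val ∈ cubicPoint x :=
    hB ▸ (vecMul_mem_projAct_iff B).2 (mem_span_singleton_self _)
  obtain ⟨k, hk⟩ := mem_span_singleton.1 image_mem
  rw [← hk, Pi.smul_apply, hj, smul_zero]

lemma exists_cubicProj_eq_of_fixes_base (hF : 5 ≤ #F) {B : GL (Fin 4) F}
    (hB : Set.MapsTo (projAct F B) (twistedCubic F) (twistedCubic F))
    (h0 : projAct F B (cubicPoint ![1, 0]) = cubicPoint ![1, 0])
    (h1 : projAct F B (cubicPoint ![0, 1]) = cubicPoint ![0, 1]) :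
    ∃ g : GL (Fin 2) F, projAct F B = cubicProj g := by
  have cubicVec_zero : cubicVec ![(1 : F), 0] = Pi.single 0 1 := by
    ext i
    fin_cases i <;> simp [cubicVec]
  have cubicVec_one : cubicVec ![(0 : F), 1] = Pi.single 3 1 := by
    ext i
    fin_cases i <;> simp [cubicVec]
  have row0 (j : Fin 4) (hj : j ≠ 0) : B.val 0 j = 0 := by
    simpa [cubicVec_zero, hj] using
      vecMul_cubicVec_eq_zero_of_projAct_cubicPoint_eq h0 (j := j)
  have row3 (j : Fin 4) (hj : j ≠ 3) : B.val 3 j = 0 := by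
    simpa [cubicVec_one, hj] using
      vecMul_cubicVec_eq_zero_of_projAct_cubicPoint_eq h1 (j := j)
  have image_mem (t : F) : span F {cubicVec ![t, 1] ᵥ* B.val} ∈ twistedCubic F := by
    rw [← projAct_span_singleton]
    exact hB (mem_twistedCubic_iff.2 ⟨![t, 1], by simp, rfl⟩)
  obtain ⟨k, d, hk, hd, hBd⟩ :=
    exists_eq_smul_symCube_diagonal hF B.det_ne_zero row0 row3 image_mem
  exact ⟨monomialGL (.inl (Units.mk0 d hd)), projAct_eq_of_eq_smul hk hBd⟩

theorem Gq_eq_range_cubicProj (hF : 5 ≤ #F) : Gq F = Set.range cubicProj := by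
  refine Set.Subset.antisymm ?_ (Set.range_subset_iff.2 cubicProj_mem_Gq)
  rintro _ ⟨⟨A, rfl⟩, hA⟩
  have mapsTo_A : Set.MapsTo (projAct F A) (twistedCubic F) (twistedCubic F) :=
    Set.mapsTo_iff_image_subset.2 hA.subset
  obtain ⟨g, hg0, hg1⟩ := exists_cubicProj_eq_on_base mapsTo_A
  have projAct_B : projAct F (A * Units.map symCube g⁻¹) = cubicProj g⁻¹ ∘ projAct F A :=
    projAct_mul _ _
  obtain ⟨h, hh⟩ := exists_cubicProj_eq_of_fixes_base hF (B := A * Units.map symCube g⁻¹)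
    (projAct_B ▸ (mapsTo_cubicProj g⁻¹).comp mapsTo_A)
    (by rw [projAct_B, Function.comp_apply, hg0, leftInverse_cubicProj_inv])
    (by rw [projAct_B, Function.comp_apply, hg1, leftInverse_cubicProj_inv])
  refine ⟨h * g, ?_⟩
  rw [cubicProj_mul, ← hh, projAct_B, ← Function.comp_assoc,
    (rightInverse_cubicProj_inv g).comp_eq_id, Function.id_comp]

end Classification

section RealAxes

variable {F : Type} [Field F]

/-- The real axis `x₀ = x₃ = 0`, the intersection of the osculating planes at `P(0)` and
`P(∞)`. -/
def baseAxis (F : Type) [Field F] : Submodule F (Fin 4 → F) :=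
  span F {![0, 0, 1, 0], ![0, 1, 0, 0]}

lemma mem_baseAxis_iff {v : Fin 4 → F} : v ∈ baseAxis F ↔ v 0 = 0 ∧ v 3 = 0 := by
  rw [baseAxis, mem_span_pair]
  constructor
  · rintro ⟨a, b, rfl⟩
    simp
  · rintro ⟨h0, h3⟩
    refine ⟨v 2, v 1, ?_⟩
    ext i
    fin_cases i <;> simp [h0, h3]

lemma baseAxis_eq_inf : baseAxis F = osculatingPlane ![1, 0] ⊓ osculatingPlane ![0, 1] := by
  ext v
  simp [mem_baseAxis_iff, mem_osculatingPlane_iff, and_comm]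

lemma cubicProj_baseAxis (g : GL (Fin 2) F) :
    cubicProj g (baseAxis F) =
      osculatingPlane (![1, 0] ᵥ* g.val) ⊓ osculatingPlane (![0, 1] ᵥ* g.val) := by
  rw [← cubicProj_osculatingPlane, ← cubicProj_osculatingPlane, baseAxis_eq_inf]
  exact projAct_inf _ _ _

lemma isRealAxis_iff {ℓ : Submodule F (Fin 4 → F)} :
    isRealAxis F ℓ ↔ ∃ g, cubicProj g (baseAxis F) = ℓ := by
  constructor
  · rintro ⟨_, _, hx_osc, hy_osc, hne, rfl⟩
    obtain ⟨x, hx, rfl⟩ := isOscPlane_iff.1 hx_osc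
    obtain ⟨y, hy, rfl⟩ := isOscPlane_iff.1 hy_osc
    have independent : LinearIndependent F ![x, y] :=
      linearIndependent_pair_of_forall_smul_ne hx hy fun k hk hxy =>
        hne (by rw [← hxy, osculatingPlane_smul hk])
    obtain ⟨g, rfl, rfl⟩ := exists_GL_of_linearIndependent independent
    exact ⟨g, cubicProj_baseAxis g⟩
  · rintro ⟨g, rfl⟩
    have base_ne : osculatingPlane ![(1 : F), 0] ≠ osculatingPlane ![0, 1] := fun h => by
      have mem_plane : cubicVec ![(1 : F), 0] ∈ osculatingPlane ![0, 1] :=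
        h ▸ cubicVec_mem_osculatingPlane_iff.2 (mul_comm _ _)
      simpa using cubicVec_mem_osculatingPlane_iff.1 mem_plane
    refine ⟨_, _, isOscPlane_iff.2 ⟨_, vecMul_ne_zero g (by simp), rfl⟩,
      isOscPlane_iff.2 ⟨_, vecMul_ne_zero g (by simp), rfl⟩, ?_, cubicProj_baseAxis g⟩
    rw [← cubicProj_osculatingPlane, ← cubicProj_osculatingPlane]
    exact (projAct_injective _).ne base_ne

lemma isRealAxis_baseAxis : isRealAxis F (baseAxis F) :=
  isRealAxis_iff.2 ⟨1, by rw [cubicProj, map_one, projAct_one, id]⟩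

lemma setOf_isRealAxis_eq_lineOrbit (hF : 5 ≤ #F) :
    {ℓ | isRealAxis F ℓ} = lineOrbit F (baseAxis F) := by
  ext ℓ
  rw [lineOrbit, Gq_eq_range_cubicProj hF, Set.mem_ofPred_eq, Set.mem_ofPred_eq, isRealAxis_iff,
    Set.exists_range_iff]

end RealAxes

section Stabilizer

variable {F : Type} [Field F]

lemma mul_eq_zero_of_baseAxis_le_osculatingPlane (h3 : (3 : F) ≠ 0) {x : Fin 2 → F}
    (h : baseAxis F ≤ osculatingPlane x) : x 0 * x 1 = 0 := by
  have mem_plane : ![0, 1, 0, 0] ∈ osculatingPlane x := h (mem_baseAxis_iff.2 (by simp))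
  simpa [mem_osculatingPlane_iff, h3] using mem_plane

lemma exists_eq_smul_monomialGL {g : GL (Fin 2) F} (h0 : g.val 0 0 * g.val 0 1 = 0)
    (h1 : g.val 1 0 * g.val 1 1 = 0) :
    ∃ k : F, k ≠ 0 ∧ ∃ s, g.val = k • (monomialGL s).val := by
  have hdet : g.val 0 0 * g.val 1 1 - g.val 0 1 * g.val 1 0 ≠ 0 := by
    simpa only [det_fin_two] using g.det_ne_zero
  by_cases h00 : g.val 0 0 = 0
  · rw [h00, zero_mul, zero_sub, neg_ne_zero, mul_ne_zero_iff] at hdet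
    obtain ⟨h01, h10⟩ := hdet
    have h11 : g.val 1 1 = 0 := (mul_eq_zero.1 h1).resolve_left h10
    refine ⟨g.val 0 1, h01, .inr (Units.mk0 _ (div_ne_zero h10 h01)), ?_⟩
    ext i j
    fin_cases i <;> fin_cases j <;>
      simp [monomialGL, GeneralLinearGroup.mkOfDetNeZero, h00, h11, mul_div_cancel₀ _ h01]
  · have h01 : g.val 0 1 = 0 := (mul_eq_zero.1 h0).resolve_left h00
    rw [h01, zero_mul, sub_zero, mul_ne_zero_iff] at hdet
    have h10 : g.val 1 0 = 0 := (mul_eq_zero.1 h1).resolve_right hdet.2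
    refine ⟨g.val 0 0, h00, .inl (Units.mk0 _ (div_ne_zero hdet.2 h00)), ?_⟩
    ext i j
    fin_cases i <;> fin_cases j <;>
      simp [monomialGL, GeneralLinearGroup.mkOfDetNeZero, h01, h10, mul_div_cancel₀ _ h00]

lemma cubicProj_monomialGL_baseAxis (s : Fˣ ⊕ Fˣ) :
    cubicProj (monomialGL s) (baseAxis F) = baseAxis F := by
  rw [cubicProj_baseAxis, baseAxis_eq_inf]
  rcases s with d | b
  · have row0 : ![1, 0] ᵥ* (monomialGL (.inl d)).val = ![1, 0] := by
      simp [monomialGL, GeneralLinearGroup.mkOfDetNeZero]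
    have row1 : ![0, 1] ᵥ* (monomialGL (.inl d)).val = d.val • ![0, 1] := by
      simp [monomialGL, GeneralLinearGroup.mkOfDetNeZero]
    rw [row0, row1, osculatingPlane_smul d.ne_zero]
  · have row0 : ![1, 0] ᵥ* (monomialGL (.inr b)).val = ![0, 1] := by
      simp [monomialGL, GeneralLinearGroup.mkOfDetNeZero]
    have row1 : ![0, 1] ᵥ* (monomialGL (.inr b)).val = b.val • ![1, 0] := by
      simp [monomialGL, GeneralLinearGroup.mkOfDetNeZero]
    rw [row0, row1, osculatingPlane_smul b.ne_zero, inf_comm]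

lemma lineStab_baseAxis (hF : 5 ≤ #F) (h3 : (3 : F) ≠ 0) :
    lineStab F (baseAxis F) = Set.range fun s => cubicProj (monomialGL s) := by
  refine Set.Subset.antisymm ?_ (Set.range_subset_iff.2 fun s =>
    ⟨cubicProj_mem_Gq _, cubicProj_monomialGL_baseAxis s⟩)
  rintro f ⟨hf, hstab⟩
  rw [Gq_eq_range_cubicProj hF] at hf
  obtain ⟨g, rfl⟩ := hf
  rw [cubicProj_baseAxis] at hstab
  have row0 := mul_eq_zero_of_baseAxis_le_osculatingPlane h3 (hstab.symm.le.trans inf_le_left)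
  have row1 := mul_eq_zero_of_baseAxis_le_osculatingPlane h3 (hstab.symm.le.trans inf_le_right)
  obtain ⟨k, hk, s, hs⟩ := exists_eq_smul_monomialGL (g := g)
    (by simpa [vecMul, dotProduct] using row0) (by simpa [vecMul, dotProduct] using row1)
  exact ⟨s, (cubicProj_eq_of_eq_smul hk hs).symm⟩

lemma cubicProj_monomialGL_injective :
    Function.Injective fun s : Fˣ ⊕ Fˣ => cubicProj (monomialGL s) := by
  intro s s' h
  have parallel (x : Fin 2 → F) :
      (x ᵥ* (monomialGL s).val) 0 * (x ᵥ* (monomialGL s').val) 1 =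
        (x ᵥ* (monomialGL s).val) 1 * (x ᵥ* (monomialGL s').val) 0 := by
    refine mul_eq_mul_of_cubicPoint_eq ?_
    rw [← cubicProj_cubicPoint, ← cubicProj_cubicPoint]
    exact congrFun h _
  have at_infinity := parallel ![1, 0]
  have at_one := parallel ![1, 1]
  rcases s with d | b <;> rcases s' with d' | b' <;>
    simp_all [monomialGL, GeneralLinearGroup.mkOfDetNeZero, Units.ext_iff]

lemma mk_lineStab_of_isRealAxis (hF : 5 ≤ #F) (h3 : (3 : F) ≠ 0) {ℓ : Submodule F (Fin 4 → F)}
    (hℓ : isRealAxis F ℓ) : #(lineStab F ℓ) = 2 * #Fˣ := by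
  obtain ⟨g, rfl⟩ := isRealAxis_iff.1 hℓ
  rw [mk_lineStab_apply (cubicProj_mem_Gq g), lineStab_baseAxis hF h3,
    Cardinal.mk_range_eq _ cubicProj_monomialGL_injective, Cardinal.mk_sum, Cardinal.lift_id,
    two_mul]

lemma range_cubicProj_monomialGL :
    (Set.range fun s : Fˣ ⊕ Fˣ => cubicProj (monomialGL s)) =
      {f | ∃ A : GL (Fin 4) F,
        ((∃ d : F, d ≠ 0 ∧
            A.val = !![1, 0, 0, 0; 0, d, 0, 0; 0, 0, d ^ 2, 0; 0, 0, 0, d ^ 3]) ∨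
          (∃ b : F, b ≠ 0 ∧
            A.val = !![0, 0, 0, 1; 0, 0, b, 0; 0, b ^ 2, 0, 0; b ^ 3, 0, 0, 0])) ∧
        f = projAct F A} := by
  ext f
  constructor
  · rintro ⟨d | b, rfl⟩
    · exact ⟨_, .inl ⟨d, d.ne_zero, symCube_diagonal d.val⟩, rfl⟩
    · exact ⟨_, .inr ⟨b, b.ne_zero, symCube_antidiagonal b.val⟩, rfl⟩
  · rintro ⟨A, ⟨d, hd, hA⟩ | ⟨b, hb, hA⟩, rfl⟩
    · exact ⟨.inl (Units.mk0 d hd),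
        congrArg (projAct F) (Units.ext ((symCube_diagonal d).trans hA.symm))⟩
    · exact ⟨.inr (Units.mk0 b hb),
        congrArg (projAct F) (Units.ext ((symCube_antidiagonal b).trans hA.symm))⟩

end Stabilizer

lemma three_ne_zero_of_card_mod_three_ne_zero {R : Type*} [CommRing R] [Nontrivial R] [Fintype R]
    (h : Fintype.card R % 3 ≠ 0) : (3 : R) ≠ 0 := by
  have : Fact (Nat.Prime 3) := ⟨Nat.prime_three⟩
  have isUnit_three : IsUnit ((3 : ℕ) : R) := by
    rwa [isUnit_iff_not_dvd_char, prime_dvd_char_iff_dvd_card, Nat.dvd_iff_mod_eq_zero]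
  exact_mod_cast isUnit_three.ne_zero

end TwistedCubic

theorem stmt_5_general (F : Type) [Field F] (hF : 5 ≤ #F) (h3 : (3 : F) ≠ 0) :
    isRealAxis F (Submodule.span F {![0, 0, 1, 0], ![0, 1, 0, 0]}) ∧
    {ℓ | isRealAxis F ℓ} = lineOrbit F (Submodule.span F {![0, 0, 1, 0], ![0, 1, 0, 0]}) ∧
    (∀ ℓ, isRealAxis F ℓ → #(lineStab F ℓ) = 2 * #Fˣ) ∧
    lineStab F (Submodule.span F {![0, 0, 1, 0], ![0, 1, 0, 0]}) =
      {f | ∃ A : GL (Fin 4) F,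
        ((∃ d : F, d ≠ 0 ∧
            A.val = !![1, 0, 0, 0; 0, d, 0, 0; 0, 0, d ^ 2, 0; 0, 0, 0, d ^ 3]) ∨
          (∃ b : F, b ≠ 0 ∧
            A.val = !![0, 0, 0, 1; 0, 0, b, 0; 0, b ^ 2, 0, 0; b ^ 3, 0, 0, 0])) ∧
        f = projAct F A} :=
  ⟨TwistedCubic.isRealAxis_baseAxis,
    TwistedCubic.setOf_isRealAxis_eq_lineOrbit hF,
    fun _ => TwistedCubic.mk_lineStab_of_isRealAxis hF h3,
    (TwistedCubic.lineStab_baseAxis hF h3).trans TwistedCubic.range_cubicProj_monomialGL⟩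

theorem stmt_5 (q : ℕ) (F : Type) [Field F] [Fintype F]
    (hcard : Fintype.card F = q) (hq : 5 ≤ q) (hq3 : q % 3 ≠ 0) :
    isRealAxis F (Submodule.span F ({![0, 0, 1, 0], ![0, 1, 0, 0]} : Set (Fin 4 → F))) ∧
    {ℓ : Submodule F (Fin 4 → F) | isRealAxis F ℓ} = lineOrbit F (Submodule.span F ({![0, 0, 1, 0], ![0, 1, 0, 0]} : Set (Fin 4 → F))) ∧
    (∀ ℓ : Submodule F (Fin 4 → F), isRealAxis F ℓ → (lineStab F ℓ).ncard = 2 * (q - 1)) ∧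
    lineStab F (Submodule.span F ({![0, 0, 1, 0], ![0, 1, 0, 0]} : Set (Fin 4 → F))) =
      {f | ∃ A : GL (Fin 4) F,
        ((∃ d : F, d ≠ 0 ∧
            (↑A : Matrix (Fin 4) (Fin 4) F) =
              !![1, 0, 0, 0; 0, d, 0, 0; 0, 0, d ^ 2, 0; 0, 0, 0, d ^ 3]) ∨
          (∃ b : F, b ≠ 0 ∧
            (↑A : Matrix (Fin 4) (Fin 4) F) =
              !![0, 0, 0, 1; 0, 0, b, 0; 0, b ^ 2, 0, 0; b ^ 3, 0, 0, 0])) ∧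
        f = projAct F A} := by
  subst hcard
  obtain ⟨isRealAxis_ℓ, orbit_ℓ, mk_stab, stab_ℓ⟩ := stmt_5_general F
    (by rw [Cardinal.mk_fintype]; exact_mod_cast hq)
    (TwistedCubic.three_ne_zero_of_card_mod_three_ne_zero hq3)
  refine ⟨isRealAxis_ℓ, orbit_ℓ, fun ℓ hℓ => ?_, stab_ℓ⟩
  rw [← Nat.card_coe_set_eq, Nat.card, mk_stab ℓ hℓ, map_mul, Cardinal.toNat_ofNat, ← Nat.card,
    Nat.card_units, Nat.card_eq_fintype_card]
end
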